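/- arXiv:2312.15945 — 3 statements merged into one kernel-verified Lean document; each statement's English description precedes it below -/
import Mathlib

section
/- If f(z) = Σ_{n≥0} a_n z^n is analytic on the unit disk with |f(z)| ≤ 1, then for every 0 < r ≤ 1/√2, Σ_{n≥1} n |a_n|^2 r^{2n} ≤ r^2 (1 − |a_0|^2)^2 / (1 − |a_0|^2 r^2)^2. -/
/-!
Put `A = ‖a 0‖ ^ 2`. The theorem follows from the coefficient inequality
`∑_{k=1}^n ‖a k‖ ^ 2 ≤ (1 - A) ^ 2 * ∑_{k<n} A ^ k` by Abel summation against the weights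
`k * r ^ (2 * k)`, which are nonincreasing in `k ≥ 1` exactly when `r ^ 2 ≤ 1 / 2`; the right-hand
side sums to the claimed bound because `∑ (k + 1) * q ^ k = 1 / (1 - q) ^ 2`.

For the coefficient inequality, let `ω = (f - a 0) / (1 - conj (a 0) * f)`, so that `‖ω‖ ≤ 1`,
`ω 0 = 0` and `f - a 0 = ω * G` with `G = 1 - conj (a 0) * f`. Multiplication by `ω` is a
contraction of `H²`. As `ω 0 = 0`, the coefficients of `ω * G` up to order `n` only see those of `G`
up to order `n - 1`, which are `1 - A` and `-conj (a 0) * a k`. Hence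
`∑_{k=1}^n ‖a k‖ ^ 2 ≤ (1 - A) ^ 2 + A * ∑_{k=1}^{n-1} ‖a k‖ ^ 2` (`coeff_recursion`), and induction
on `n` finishes (`coeff_sum_le`). The case `A = 1`, where `f` is constant, follows from
`∑ ‖a k‖ ^ 2 ≤ 1`. The contraction property is `multiplier_contraction`, proved on circles of
radius `ρ < 1` with `L²` of the unit circle.
-/

open MeasureTheory Filter Topology

/-! ### Square sums of coefficients and multipliers of `H²` -/

/-- Bessel's inequality for `∑ c k * u ^ k` and Parseval's identity for the polynomial
`∑_{k<m} d k * u ^ k`: domination on the unit circle passes to square sums of coefficients. -/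
lemma sum_sq_le_of_circle_le (c d : ℕ → ℂ) (m : ℕ) (hc : Summable fun k => ‖c k‖)
    (h : ∀ u : ℂ, ‖u‖ = 1 →
      ‖∑' k, c k * u ^ k‖ ≤ ‖∑ k ∈ Finset.range m, d k * u ^ k‖) (n : ℕ) :
    ∑ k ∈ Finset.range n, ‖c k‖ ^ 2 ≤ ∑ k ∈ Finset.range m, ‖d k‖ ^ 2 := by
  have : Fact (0 < (1 : ℝ)) := ⟨one_pos⟩
  let e : ℕ → C(AddCircle (1 : ℝ), ℂ) := fun k => fourier (k : ℤ)
  let L := ContinuousMap.toLp (E := ℂ) 2 (AddCircle.haarAddCircle (T := 1)) ℂ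
  let v : ℕ → Lp ℂ 2 (AddCircle.haarAddCircle (T := 1)) := fun k => L (e k)
  have hv : Orthonormal ℂ v :=
    (orthonormal_fourier (T := 1)).comp (fun k : ℕ => (k : ℤ)) Nat.cast_injective
  have hsum : Summable fun k => c k • e k := by
    apply Summable.of_norm
    simpa only [e, norm_smul, fourier_norm, mul_one] using hc
  have heval : ∀ (x : AddCircle (1 : ℝ)) (k : ℕ), e k x = (fourier 1 x : ℂ) ^ k := by
    intro x k
    simp [e, fourier_apply, AddCircle.toCircle_nsmul]
  obtain ⟨g, hg⟩ := hsum
  have hgx : ∀ x, g x = ∑' k, c k * (fourier 1 x : ℂ) ^ k := by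
    intro x
    have := (ContinuousMap.evalCLM ℂ x).hasSum hg
    have h2 := this.tsum_eq
    simpa [heval] using h2.symm
  let q : C(AddCircle (1 : ℝ), ℂ) := ∑ k ∈ Finset.range m, d k • e k
  have hqx : ∀ x, q x = ∑ k ∈ Finset.range m, d k * (fourier 1 x : ℂ) ^ k := by
    intro x
    simp [q, ContinuousMap.sum_apply, heval]
  have hle : ‖L g‖ ≤ ‖L q‖ := by
    apply Lp.norm_le_norm_of_ae_le
    filter_upwards [ContinuousMap.coeFn_toLp (p := 2) (𝕜 := ℂ)
        (AddCircle.haarAddCircle (T := 1)) g,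
      ContinuousMap.coeFn_toLp (p := 2) (𝕜 := ℂ)
        (AddCircle.haarAddCircle (T := 1)) q] with x h1 h2
    change ‖(L g) x‖ ≤ ‖(L q) x‖
    rw [h1, h2, hgx, hqx]
    exact h _ (by rw [fourier_apply]; exact Circle.norm_coe _)
  have hcoef : ∀ k, inner ℂ (v k) (L g) = c k := by
    intro k
    have h1 := (innerSL ℂ (v k)).hasSum (L.hasSum hg)
    have h2 : HasSum (fun j => inner ℂ (v k) (L (c j • e j))) (c k) := by
      have : (fun j => inner ℂ (v k) (L (c j • e j))) = fun j => if j = k then c k else 0 := by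
        funext j
        have := orthonormal_iff_ite.mp hv k j
        rw [map_smul, inner_smul_right]
        change c j * inner ℂ (v k) (v j) = _
        rw [this]
        by_cases hjk : j = k
        · simp [hjk]
        · simp [hjk, Ne.symm hjk]
      rw [this]
      exact hasSum_ite_eq k (c k)
    exact h1.unique h2
  have hq : ‖L q‖ ^ 2 = ∑ k ∈ Finset.range m, ‖d k‖ ^ 2 := by
    have h1 : L q = ∑ k ∈ Finset.range m, d k • v k := by
      simp [q, v]
    have h2 := hv.inner_sum d d (Finset.range m)
    rw [← h1, inner_self_eq_norm_sq_to_K] at h2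
    have h3 : ((‖L q‖ ^ 2 : ℝ) : ℂ) = ((∑ k ∈ Finset.range m, ‖d k‖ ^ 2 : ℝ) : ℂ) := by
      push_cast
      refine h2.trans (Finset.sum_congr rfl fun k _ => ?_)
      exact Complex.conj_mul' (d k)
    exact_mod_cast h3
  calc ∑ k ∈ Finset.range n, ‖c k‖ ^ 2
      = ∑ k ∈ Finset.range n, ‖inner ℂ (v k) (L g)‖ ^ 2 := by simp_rw [hcoef]
    _ ≤ ‖L g‖ ^ 2 := hv.sum_inner_products_le _
    _ ≤ ‖L q‖ ^ 2 := by gcongr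
    _ = _ := hq

/-- Uniqueness of power series coefficients, from Bessel's inequality on the circle of radius
`1 / 2`. -/
lemma coeff_eq_zero (c : ℕ → ℂ) (h : ∀ z : ℂ, ‖z‖ < 1 → HasSum (fun k => c k * z ^ k) 0) (k : ℕ) :
    c k = 0 := by
  have h2 := sum_sq_le_of_circle_le (fun k => c k * (1 / 2) ^ k) 0 0
    (h (1 / 2) (by norm_num)).summable.norm (by
      intro u hu
      have h1 := (h (1 / 2 * u) (by rw [norm_mul, hu]; norm_num)).tsum_eq
      simp only [mul_pow, ← mul_assoc] at h1
      simp only [h1]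
      simp) (k + 1)
  have h3 : ‖c k * (1 / 2) ^ k‖ ^ 2 ≤ 0 :=
    (Finset.single_le_sum (f := fun k => ‖c k * (1 / 2) ^ k‖ ^ 2) (fun _ _ => by positivity)
      (Finset.self_mem_range_succ k)).trans (by simpa using h2)
  have h4 : ‖c k * (1 / 2) ^ k‖ = 0 := by
    have := norm_nonneg (c k * (1 / 2) ^ k)
    nlinarith
  simpa using h4

lemma hasSum_cauchy_product (w d : ℕ → ℂ) (z W D : ℂ) (hw : HasSum (fun k => w k * z ^ k) W)
    (hd : HasSum (fun k => d k * z ^ k) D) :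
    HasSum (fun k => (∑ p ∈ Finset.HasAntidiagonal.antidiagonal k, w p.1 * d p.2) * z ^ k) (W * D) := by
  have hs := (summable_norm_sum_mul_antidiagonal_of_summable_norm
    hw.summable.norm hd.summable.norm).of_norm.hasSum
  rw [← tsum_mul_tsum_eq_tsum_sum_antidiagonal_of_summable_norm
    hw.summable.norm hd.summable.norm, hw.tsum_eq, hd.tsum_eq] at hs
  convert! hs using 2 with k
  rw [Finset.sum_mul]
  refine Finset.sum_congr rfl fun p hp => ?_
  rw [← Finset.HasAntidiagonal.mem_antidiagonal.mp hp, pow_add]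
  ring

/-- Multiplication by a function bounded by `1` on the disk does not increase the `H²` norm of a
polynomial. -/
lemma multiplier_contraction (w : ℕ → ℂ) (ω : ℂ → ℂ)
    (hw : ∀ z : ℂ, ‖z‖ < 1 → HasSum (fun k => w k * z ^ k) (ω z))
    (hb : ∀ z : ℂ, ‖z‖ < 1 → ‖ω z‖ ≤ 1) (d : ℕ → ℂ) (m n : ℕ) :
    ∑ k ∈ Finset.range n,
        ‖∑ p ∈ Finset.HasAntidiagonal.antidiagonal k, w p.1 * (if p.2 < m then d p.2 else 0)‖ ^ 2
      ≤ ∑ k ∈ Finset.range m, ‖d k‖ ^ 2 := by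
  let b : ℕ → ℂ := fun k =>
    ∑ p ∈ Finset.HasAntidiagonal.antidiagonal k, w p.1 * (if p.2 < m then d p.2 else 0)
  have hd : ∀ z : ℂ, HasSum (fun k => (if k < m then d k else 0) * z ^ k)
      (∑ k ∈ Finset.range m, d k * z ^ k) := by
    intro z
    have h1 : ∑ k ∈ Finset.range m, d k * z ^ k
        = ∑ k ∈ Finset.range m, (if k < m then d k else 0) * z ^ k :=
      Finset.sum_congr rfl fun k hk => by rw [if_pos (Finset.mem_range.mp hk)]
    rw [h1]
    apply hasSum_sum_of_ne_finset_zero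
    intro k hk
    simp [Finset.mem_range.not.mp hk]
  have hprod : ∀ z : ℂ, ‖z‖ < 1 →
      HasSum (fun k => b k * z ^ k) (ω z * ∑ k ∈ Finset.range m, d k * z ^ k) :=
    fun z hz => hasSum_cauchy_product w (fun k => if k < m then d k else 0) z _ _ (hw z hz) (hd z)
  have hρ : ∀ ρ : ℝ, 0 < ρ → ρ < 1 →
      ∑ k ∈ Finset.range n, (‖b k‖ * ρ ^ k) ^ 2 ≤ ∑ k ∈ Finset.range m, ‖d k‖ ^ 2 := by
    intro ρ h0 h1
    have hn : ‖(ρ : ℂ)‖ = ρ := by simp [abs_of_pos h0]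
    have := sum_sq_le_of_circle_le (fun k => b k * (ρ : ℂ) ^ k) (fun k => d k * (ρ : ℂ) ^ k) m
      (hprod ρ (by rwa [hn])).summable.norm (by
        intro u hu
        have hz : ‖(ρ : ℂ) * u‖ < 1 := by rwa [norm_mul, hu, hn, mul_one]
        simp only [mul_assoc, ← mul_pow]
        rw [(hprod _ hz).tsum_eq, norm_mul]
        exact mul_le_of_le_one_left (norm_nonneg _) (hb _ hz)) n
    simp only [norm_mul, norm_pow, hn] at this
    refine this.trans (Finset.sum_le_sum fun k _ => ?_)
    have : ρ ^ k ≤ 1 := pow_le_one₀ h0.le h1.le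
    gcongr
    exact mul_le_of_le_one_right (norm_nonneg _) this
  have hlim : Tendsto (fun ρ : ℝ => ∑ k ∈ Finset.range n, (‖b k‖ * ρ ^ k) ^ 2) (𝓝[<] 1)
      (𝓝 (∑ k ∈ Finset.range n, ‖b k‖ ^ 2)) := by
    have hc : Continuous fun ρ : ℝ => ∑ k ∈ Finset.range n, (‖b k‖ * ρ ^ k) ^ 2 := by fun_prop
    have := (hc.tendsto 1).mono_left (nhdsWithin_le_nhds (s := Set.Iio 1))
    simpa using this
  change ∑ k ∈ Finset.range n, ‖b k‖ ^ 2 ≤ _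
  refine le_of_tendsto hlim ?_
  filter_upwards [Ioo_mem_nhdsLT (show (0 : ℝ) < 1 by norm_num)] with ρ hh
  exact hρ ρ hh.1 hh.2

/-- The sum of a power series on the unit disk is holomorphic there. -/
lemma differentiableOn_of_hasSum (f : ℂ → ℂ) (a : ℕ → ℂ)
    (hf : ∀ z : ℂ, ‖z‖ < 1 → HasSum (fun n => a n * z ^ n) (f z)) :
    DifferentiableOn ℂ f (Metric.ball 0 1) := by
  intro z hz
  have hz1 : ‖z‖ < 1 := by simpa using hz
  obtain ⟨ρ, h1, h2⟩ := exists_between hz1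
  have h0 : 0 < ρ := (norm_nonneg z).trans_lt h1
  have hn : ‖(ρ : ℂ)‖ = ρ := by simp [abs_of_pos h0]
  have hs : Summable fun n => ‖a n‖ * ρ ^ n := by
    have := (hf ρ (by rwa [hn])).summable.norm
    simpa only [norm_mul, norm_pow, hn] using this
  have hd := Complex.differentiableOn_tsum_of_summable_norm (U := Metric.ball (0 : ℂ) ρ)
    (F := fun n z => a n * z ^ n) hs (fun n => by fun_prop) Metric.isOpen_ball (by
      intro n w hw
      have : ‖w‖ ≤ ρ := le_of_lt (by simpa using hw)
      rw [norm_mul, norm_pow]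
      gcongr)
  have hmem : Metric.ball (0 : ℂ) ρ ∈ 𝓝 z := Metric.isOpen_ball.mem_nhds (by simpa using h1)
  have h3 := (hd z (mem_of_mem_nhds hmem)).differentiableAt hmem
  refine (h3.congr_of_eventuallyEq ?_).differentiableWithinAt
  filter_upwards [hmem] with w hw
  have : ‖w‖ < 1 := lt_trans (by simpa using hw) h2
  exact (hf w this).tsum_eq.symm

/-! ### The coefficient inequality for bounded functions -/

/-- The disk automorphism `w ↦ (w - α) / (1 - conj α * w)` is bounded by `1`, stated without the
division. -/
lemma norm_sub_le_norm_one_sub (α w : ℂ) (hα : ‖α‖ ≤ 1) (hw : ‖w‖ ≤ 1) :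
    ‖w - α‖ ≤ ‖1 - (starRingEnd ℂ) α * w‖ := by
  have h1 : ‖1 - (starRingEnd ℂ) α * w‖ ^ 2 - ‖w - α‖ ^ 2 = (1 - ‖α‖ ^ 2) * (1 - ‖w‖ ^ 2) := by
    simp only [← Complex.normSq_eq_norm_sq, Complex.normSq_apply]
    simp
    ring
  have h2 : 0 ≤ (1 - ‖α‖ ^ 2) * (1 - ‖w‖ ^ 2) :=
    mul_nonneg (by nlinarith [norm_nonneg α]) (by nlinarith [norm_nonneg w])
  exact le_of_sq_le_sq (by linarith) (norm_nonneg _)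

lemma sum_coeff_sq_le_one (f : ℂ → ℂ) (a : ℕ → ℂ)
    (hf : ∀ z : ℂ, ‖z‖ < 1 → HasSum (fun n => a n * z ^ n) (f z))
    (hbd : ∀ z : ℂ, ‖z‖ < 1 → ‖f z‖ ≤ 1)
    (n : ℕ) : ∑ k ∈ Finset.range n, ‖a k‖ ^ 2 ≤ 1 := by
  have h := multiplier_contraction a f hf hbd (fun _ => 1) 1 n
  have h2 : ∀ k, ∑ p ∈ Finset.HasAntidiagonal.antidiagonal k, a p.1 * (if p.2 < 1 then (1 : ℂ) else 0) = a k := by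
    intro k
    rw [Finset.sum_eq_single (k, 0)]
    · simp
    · rintro ⟨i, j⟩ hp hne
      have : j ≠ 0 := by
        rintro rfl
        simp at hp
        simp [hp] at hne
      simp [this]
    · simp
  simp only [h2] at h
  simpa using h

/-- Contractivity of multiplication by `ω = (f - a 0) / (1 - conj (a 0) * f)`, applied to the
truncation of `1 - conj (a 0) * f` at order `n`. -/
lemma coeff_recursion (f : ℂ → ℂ) (a : ℕ → ℂ)
    (hf : ∀ z : ℂ, ‖z‖ < 1 → HasSum (fun n => a n * z ^ n) (f z))
    (hbd : ∀ z : ℂ, ‖z‖ < 1 → ‖f z‖ ≤ 1)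
    (h1 : ‖a 0‖ < 1) (n : ℕ) :
    ∑ k ∈ Finset.range (n + 1), ‖a (k + 1)‖ ^ 2 ≤
      (1 - ‖a 0‖ ^ 2) ^ 2 + ‖a 0‖ ^ 2 * ∑ k ∈ Finset.range n, ‖a (k + 1)‖ ^ 2 := by
  set β := (starRingEnd ℂ) (a 0) with hβ
  have hβn : ‖β‖ = ‖a 0‖ := by simp [hβ]
  have hG : ∀ z : ℂ, ‖z‖ < 1 → 1 - β * f z ≠ 0 := by
    intro z hz h0
    have h2 : ‖β * f z‖ = 1 := by rw [← sub_eq_zero.mp h0]; simp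
    rw [norm_mul, hβn] at h2
    nlinarith [hbd z hz, norm_nonneg (a 0), norm_nonneg (f z)]
  let ω : ℂ → ℂ := fun z => (f z - a 0) / (1 - β * f z)
  have hfd := differentiableOn_of_hasSum f a hf
  have hωd : DifferentiableOn ℂ ω (Metric.ball 0 1) :=
    (hfd.sub_const _).div ((differentiableOn_const _).sub (hfd.const_mul β))
      (fun z hz => hG z (by simpa using hz))
  have hωb : ∀ z : ℂ, ‖z‖ < 1 → ‖ω z‖ ≤ 1 := by
    intro z hz
    rw [norm_div]
    exact div_le_one_of_le₀ (norm_sub_le_norm_one_sub _ _ h1.le (hbd z hz)) (norm_nonneg _)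
  let w : ℕ → ℂ := fun k => ((Nat.factorial k : ℕ) : ℂ)⁻¹ * iteratedDeriv k ω 0
  have hw : ∀ z : ℂ, ‖z‖ < 1 → HasSum (fun k => w k * z ^ k) (ω z) := by
    intro z hz
    have := Complex.hasSum_taylorSeries_on_ball hωd (z := z) (by simpa using hz)
    convert! this using 2 with k
    simp [w]
    ring
  have hf0 : f 0 = a 0 := by
    have := (hf 0 (by simp)).tsum_eq
    rw [tsum_eq_single 0 (by intro k hk; simp [hk])] at this
    simpa using this.symm
  have hw0 : w 0 = 0 := by simp [w, ω, hf0]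
  let δ : ℕ → ℂ := fun k => if k = 0 then 1 else 0
  have hδ : ∀ z : ℂ, HasSum (fun k => δ k * z ^ k) 1 := by
    intro z
    convert! hasSum_ite_eq (0 : ℕ) (1 : ℂ) using 2 with k
    by_cases hk : k = 0 <;> simp [δ, hk]
  let G : ℕ → ℂ := fun k => δ k - β * a k
  have hGs : ∀ z : ℂ, ‖z‖ < 1 → HasSum (fun k => G k * z ^ k) (1 - β * f z) := by
    intro z hz
    convert! (hδ z).sub ((hf z hz).mul_left β) using 2 with k
    simp only [G]
    ring
  have hcoef : ∀ k, a (k + 1) = ∑ p ∈ Finset.HasAntidiagonal.antidiagonal (k + 1), w p.1 * G p.2 := by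
    intro k
    have := coeff_eq_zero
      (fun k => a k - a 0 * δ k - ∑ p ∈ Finset.HasAntidiagonal.antidiagonal k, w p.1 * G p.2) (by
        intro z hz
        have h2 := ((hf z hz).sub ((hδ z).mul_left (a 0))).sub
          (hasSum_cauchy_product w G z _ _ (hw z hz) (hGs z hz))
        have h3 : f z - a 0 * 1 - ω z * (1 - β * f z) = 0 := by
          simp only [ω]
          rw [div_mul_cancel₀ _ (hG z hz)]
          ring
        rw [h3] at h2
        convert! h2 using 2 with k
        ring) (k + 1)
    simpa [δ, sub_eq_zero] using this
  have key := multiplier_contraction w ω hw hωb G (n + 1) (n + 2)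
  -- Since `w 0 = 0`, truncating `G` leaves the coefficients of orders `1, …, n + 1` unchanged.
  have htr : ∀ k ∈ Finset.range (n + 1), ∑ p ∈ Finset.HasAntidiagonal.antidiagonal (k + 1),
      w p.1 * (if p.2 < n + 1 then G p.2 else 0) = a (k + 1) := by
    intro k hk
    rw [hcoef]
    refine Finset.sum_congr rfl fun p hp => ?_
    have hk' := Finset.mem_range.mp hk
    have hp' := Finset.HasAntidiagonal.mem_antidiagonal.mp hp
    by_cases h2 : p.2 < n + 1
    · rw [if_pos h2]
    · have : p.1 = 0 := by omega
      simp [this, hw0]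
  rw [Finset.sum_range_succ'] at key
  rw [Finset.sum_congr rfl fun k hk => by rw [htr k hk]] at key
  rw [Finset.sum_range_succ' (fun k => ‖G k‖ ^ 2)] at key
  have hG0 : ‖G 0‖ ^ 2 = (1 - ‖a 0‖ ^ 2) ^ 2 := by
    have : G 0 = ((1 - ‖a 0‖ ^ 2 : ℝ) : ℂ) := by
      simp only [G, δ, hβ, if_true, Complex.conj_mul']
      push_cast
      ring
    rw [this, Complex.norm_real, Real.norm_eq_abs, sq_abs]
  have hGk : ∀ k, ‖G (k + 1)‖ ^ 2 = ‖a 0‖ ^ 2 * ‖a (k + 1)‖ ^ 2 := by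
    intro k
    simp [G, δ, hβn, mul_pow]
  simp only [hG0, hGk, ← Finset.mul_sum] at key
  have := sq_nonneg ‖∑ p ∈ Finset.HasAntidiagonal.antidiagonal 0, w p.1 * (if p.2 < n + 1 then G p.2 else 0)‖
  linarith

lemma coeff_sum_le (f : ℂ → ℂ) (a : ℕ → ℂ)
    (hf : ∀ z : ℂ, ‖z‖ < 1 → HasSum (fun n => a n * z ^ n) (f z))
    (hbd : ∀ z : ℂ, ‖z‖ < 1 → ‖f z‖ ≤ 1)
    (n : ℕ) :
    ∑ k ∈ Finset.range n, ‖a (k + 1)‖ ^ 2 ≤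
      ∑ k ∈ Finset.range n, (1 - ‖a 0‖ ^ 2) ^ 2 * (‖a 0‖ ^ 2) ^ k := by
  have h0 : ‖a 0‖ ^ 2 ≤ 1 := by simpa using sum_coeff_sq_le_one f a hf hbd 1
  rcases h0.lt_or_eq with h | h
  · have h1 : ‖a 0‖ < 1 := by nlinarith [norm_nonneg (a 0)]
    induction n with
    | zero => simp
    | succ n ih =>
      refine (coeff_recursion f a hf hbd h1 n).trans ?_
      rw [Finset.sum_range_succ']
      have := mul_le_mul_of_nonneg_left ih (sq_nonneg ‖a 0‖)
      rw [Finset.mul_sum (f := fun k => (1 - ‖a 0‖ ^ 2) ^ 2 * (‖a 0‖ ^ 2) ^ k)] at this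
      have h2 : ∀ k, ‖a 0‖ ^ 2 * ((1 - ‖a 0‖ ^ 2) ^ 2 * (‖a 0‖ ^ 2) ^ k)
          = (1 - ‖a 0‖ ^ 2) ^ 2 * (‖a 0‖ ^ 2) ^ (k + 1) := fun k => by ring
      simp only [h2] at this
      simp only [pow_zero, mul_one]
      linarith
  -- If `‖a 0‖ = 1`, all other coefficients vanish.
  · have := sum_coeff_sq_le_one f a hf hbd (n + 1)
    rw [Finset.sum_range_succ', h] at this
    simp only [h]
    simpa using this

/-! ### Summation against the weights -/

/-- Abel summation in the form suited to induction. For nonnegative `l` it shows that nonnegative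
partial sums stay nonnegative after multiplication by nonincreasing weights. -/
lemma abel_le (l t : ℕ → ℝ) (hanti : ∀ k, l (k + 1) ≤ l k)
    (ht : ∀ n, 0 ≤ ∑ k ∈ Finset.range n, t k) (n : ℕ) :
    l n * ∑ k ∈ Finset.range n, t k ≤ ∑ k ∈ Finset.range n, l k * t k := by
  induction n with
  | zero => simp
  | succ n ih =>
    have h1 := mul_le_mul_of_nonneg_right (hanti n) (ht (n + 1))
    rw [Finset.sum_range_succ] at h1 ⊢
    rw [Finset.sum_range_succ (fun k => l k * t k)]
    linarith

/-- Sharp area-type coefficient inequality (Kayumov et al.). -/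
theorem area_coefficient_inequality (f : ℂ → ℂ) (a : ℕ → ℂ)
    (hf : ∀ z : ℂ, ‖z‖ < 1 → HasSum (fun n => a n * z ^ n) (f z))
    (hbd : ∀ z : ℂ, ‖z‖ < 1 → ‖f z‖ ≤ 1)
    (r : ℝ) (hr0 : 0 < r) (hr : r ≤ 1 / Real.sqrt 2) :
    ∑' n : ℕ, (n : ℝ) * ‖a n‖ ^ 2 * r ^ (2 * n) ≤
      r ^ 2 * (1 - ‖a 0‖ ^ 2) ^ 2 / (1 - ‖a 0‖ ^ 2 * r ^ 2) ^ 2 := by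
  have hr2 : r ^ 2 ≤ 1 / 2 := by
    have := pow_le_pow_left₀ hr0.le hr 2
    rwa [div_pow, Real.sq_sqrt (by norm_num), one_pow] at this
  set A := ‖a 0‖ ^ 2 with hA
  have hA0 : 0 ≤ A := sq_nonneg _
  have hA1 : A ≤ 1 := by simpa [hA] using sum_coeff_sq_le_one f a hf hbd 1
  let l : ℕ → ℝ := fun k => ((k + 1 : ℕ) : ℝ) * (r ^ 2) ^ (k + 1)
  have hl : ∀ k, 0 ≤ l k := fun k => by positivity
  -- The bound on `r` enters here: `(k + 2) * r ^ 2 ≤ k + 1` is tightest at `k = 0`, where it reads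
  -- `r ^ 2 ≤ 1 / 2`.
  have hanti : ∀ k, l (k + 1) ≤ l k := by
    intro k
    have h1 : ((k + 1 + 1 : ℕ) : ℝ) * r ^ 2 ≤ ((k + 1 : ℕ) : ℝ) := by
      push_cast
      nlinarith [(Nat.cast_nonneg k : (0 : ℝ) ≤ k)]
    have h2 := mul_le_mul_of_nonneg_right h1 (by positivity : 0 ≤ (r ^ 2) ^ (k + 1))
    calc l (k + 1) = ((k + 1 + 1 : ℕ) : ℝ) * r ^ 2 * (r ^ 2) ^ (k + 1) := by
          simp only [l]; ring
      _ ≤ _ := h2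
  let y : ℕ → ℝ := fun k => (1 - A) ^ 2 * A ^ k
  have hy : HasSum (fun k => l k * y k) (r ^ 2 * (1 - A) ^ 2 / (1 - A * r ^ 2) ^ 2) := by
    have hq : ‖A * r ^ 2‖ < 1 := by
      rw [Real.norm_of_nonneg (by positivity)]
      nlinarith [sq_nonneg r]
    have := (hasSum_choose_mul_geometric_of_norm_lt_one 1 hq).mul_left (r ^ 2 * (1 - A) ^ 2)
    convert! this using 1
    · funext k
      simp only [l, y, Nat.choose_one_right]
      ring
    · ring
  have habel : ∀ n, ∑ k ∈ Finset.range n, l k * ‖a (k + 1)‖ ^ 2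
      ≤ ∑ k ∈ Finset.range n, l k * y k := by
    intro n
    have ht : ∀ n, 0 ≤ ∑ k ∈ Finset.range n, (y k - ‖a (k + 1)‖ ^ 2) := by
      intro n
      rw [Finset.sum_sub_distrib, sub_nonneg]
      exact coeff_sum_le f a hf hbd n
    have h1 := (mul_nonneg (hl n) (ht n)).trans
      (abel_le l (fun k => y k - ‖a (k + 1)‖ ^ 2) hanti ht n)
    simpa only [mul_sub, Finset.sum_sub_distrib, sub_nonneg] using h1
  -- Bounding finite partial sums suffices, also without summability, as all terms are nonnegative.
  apply Real.tsum_le_of_sum_range_le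
  · intro n; positivity
  · intro n
    calc ∑ k ∈ Finset.range n, (k : ℝ) * ‖a k‖ ^ 2 * r ^ (2 * k)
        ≤ ∑ k ∈ Finset.range (n + 1), (k : ℝ) * ‖a k‖ ^ 2 * r ^ (2 * k) :=
          Finset.sum_le_sum_of_subset_of_nonneg (Finset.range_mono n.le_succ)
            fun _ _ _ => by positivity
      _ = ∑ k ∈ Finset.range n, l k * ‖a (k + 1)‖ ^ 2 := by
          rw [Finset.sum_range_succ']
          simp only [Nat.cast_zero, zero_mul, add_zero]
          refine Finset.sum_congr rfl fun k _ => ?_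
          simp only [l, pow_mul]
          ring
      _ ≤ ∑ k ∈ Finset.range n, l k * y k := habel n
      _ ≤ _ := sum_le_hasSum _ (fun k _ => mul_nonneg (hl k) (by positivity)) hy
end

section
/- If f(z) = Σ_{n≥0} a_n z^n is analytic on the unit disk with |f(z)| ≤ 1, then for every N ≥ 1 and 0 ≤ r < 1, with t = ⌊(N−1)/2⌋: Σ_{n≥N} |a_n| r^n + sgn(t)·Σ_{n=1}^{t} |a_n|^2 r^N/(1−r) + (1/(1+|a_0|) + r/(1−r))·Σ_{n≥t+1} |a_n|^2 r^{2n} ≤ (1 − |a_0|^2) r^N/(1−r). -/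
/-!
The proof rests on Carlson's coefficient inequalities for `|f| ≤ 1` on the disk:
`|a_{2k+1}| ≤ 1 - ∑_{i ≤ k} |a_i|²` and, for `k ≥ 1`,
`|a_{2k}| ≤ 1 - ∑_{i < k} |a_i|² - |a_k|² / (1 + |a₀|)`.

Both come from duality. For a polynomial `P`, the `n`-th Taylor coefficient of `f P²` is bounded by
the mean of `|P|²` over the unit circle, which by Parseval is the sum of the squared moduli of the
coefficients of `P` (`norm_coeff_mul_sq_le`). Taking for `P` the constant `1` plus a unimodular
multiple of the reversed conjugate of a Taylor section of `f` (and, for even `n`, a suitable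
multiple of the middle power) produces the inequalities (`carlson_odd`, `carlson_even`).

Given these, the tail inequality is a telescoping argument: the difference of its two sides changes
from `N` to `N + 1` exactly by the defect in Carlson's inequality for `|a_N|`, times `r^N`, and
vanishes in the limit (`tail_of_carlson`).
-/

/-! ### Coefficient bounds by duality -/

lemma mem_eball_zero_one {z : ℂ} : z ∈ Metric.eball (0 : ℂ) 1 ↔ ‖z‖ < 1 := by
  rw [← ENNReal.ofReal_one, Metric.eball_ofReal, mem_ball_zero_iff]

lemma hasFPowerSeriesOnBall_ofScalars_of_hasSum {g : ℂ → ℂ} {b : ℕ → ℂ}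
    (hg : ∀ z : ℂ, ‖z‖ < 1 → HasSum (fun n => b n * z ^ n) (g z)) :
    HasFPowerSeriesOnBall g (FormalMultilinearSeries.ofScalars ℂ b) 0 1 := by
  refine ⟨?_, one_pos, ?_⟩
  · refine ENNReal.le_of_forall_nnreal_lt fun x hx => ?_
    refine FormalMultilinearSeries.le_radius_of_summable_norm _ ?_
    have hx' : (x : ℝ) < 1 := by exact_mod_cast hx
    have := (hg (x : ℝ) (by simpa using hx')).summable.norm
    simpa [FormalMultilinearSeries.ofScalars_norm] using this
  · intro y hy
    simpa [FormalMultilinearSeries.ofScalars_apply_eq, mul_comm] using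
      hg y (mem_eball_zero_one.1 hy)

lemma differentiableAt_of_hasSum {g : ℂ → ℂ} {b : ℕ → ℂ}
    (hg : ∀ z : ℂ, ‖z‖ < 1 → HasSum (fun n => b n * z ^ n) (g z)) {z : ℂ} (hz : ‖z‖ < 1) :
    DifferentiableAt ℂ g z :=
  ((hasFPowerSeriesOnBall_ofScalars_of_hasSum hg).analyticAt_of_mem
    (mem_eball_zero_one.2 hz)).differentiableAt

/-- The `n`-th Taylor coefficient is controlled by the `L¹` mean of the function on a circle. -/
lemma norm_coeff_mul_pow_le_circleAverage {g : ℂ → ℂ} {b : ℕ → ℂ}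
    (hg : ∀ z : ℂ, ‖z‖ < 1 → HasSum (fun n => b n * z ^ n) (g z))
    {ρ : ℝ} (h0 : 0 < ρ) (h1 : ρ < 1) (n : ℕ) :
    ‖b n‖ * ρ ^ n ≤ Real.circleAverage (fun z => ‖g z‖) 0 ρ := by
  have hF := hasFPowerSeriesOnBall_ofScalars_of_hasSum hg
  have hd : DifferentiableOn ℂ g (Metric.closedBall 0 ρ) := fun z hz =>
    (differentiableAt_of_hasSum hg
      (lt_of_le_of_lt (by simpa using hz) h1)).differentiableWithinAt
  have hC := DifferentiableOn.hasFPowerSeriesOnBall (R := ⟨ρ, h0.le⟩) hd h0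
  have hEq := hF.hasFPowerSeriesAt.eq_formalMultilinearSeries hC.hasFPowerSeriesAt
  have hle := norm_cauchyPowerSeries_le g 0 ρ n
  have hcp : cauchyPowerSeries g 0 ρ = FormalMultilinearSeries.ofScalars ℂ b := hEq.symm
  rw [hcp, FormalMultilinearSeries.ofScalars_norm, abs_of_pos h0, inv_pow,
    ← div_eq_mul_inv, le_div_iff₀ (by positivity)] at hle
  simpa [Real.circleAverage] using hle

/-- If `|f| ≤ 1` on the disc then, for every polynomial `P`, each Taylor coefficient of `f P²`
is at most the squared `L²` norm of `P` on the unit circle. -/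
lemma norm_coeff_mul_sq_le {f : ℂ → ℂ} {a : ℕ → ℂ}
    (hf : ∀ z : ℂ, ‖z‖ < 1 → HasSum (fun n => a n * z ^ n) (f z))
    (hbd : ∀ z : ℂ, ‖z‖ < 1 → ‖f z‖ ≤ 1) (P : Polynomial ℂ) (n : ℕ) :
    ‖PowerSeries.coeff n (PowerSeries.mk a * (P : PowerSeries ℂ) ^ 2)‖ ≤
      ∑ i ∈ P.support, ‖P.coeff i‖ ^ 2 := by
  set b : ℕ → ℂ := fun n => PowerSeries.coeff n (PowerSeries.mk a * (P : PowerSeries ℂ) ^ 2)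
    with hb
  have hg : ∀ z : ℂ, ‖z‖ < 1 → HasSum (fun n => b n * z ^ n) (f z * P.eval z ^ 2) := by
    intro z hz
    have hfin : HasSum (fun n => (P ^ 2).coeff n * z ^ n) (P.eval z ^ 2) := by
      rw [← Polynomial.eval_pow, Polynomial.eval_eq_sum, Polynomial.sum]
      apply hasSum_sum_of_ne_finset_zero
      intro i hi
      simp [Polynomial.notMem_support_iff.1 hi]
    have h1 := (hf z hz).summable.norm
    have h2 := hfin.summable.norm
    have h3 := (summable_norm_sum_mul_antidiagonal_of_summable_norm h1 h2).of_norm.hasSum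
    rw [← tsum_mul_tsum_eq_tsum_sum_antidiagonal_of_summable_norm h1 h2,
      (hf z hz).tsum_eq, hfin.tsum_eq] at h3
    convert! h3 using 2 with m
    rw [hb]
    simp only [← Polynomial.coe_pow, PowerSeries.coeff_mul, PowerSeries.coeff_mk,
      Polynomial.coeff_coe, Finset.sum_mul]
    refine Finset.sum_congr rfl fun p hp => ?_
    rw [← Finset.HasAntidiagonal.mem_antidiagonal.1 hp, pow_add]
    ring
  have key : ∀ ρ : ℝ, 0 < ρ → ρ < 1 →
      ‖b n‖ * ρ ^ n ≤ ∑ i ∈ P.support, ‖P.coeff i‖ ^ 2 := by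
    intro ρ h0 h1
    refine (norm_coeff_mul_pow_le_circleAverage hg h0 h1 n).trans ?_
    -- Parseval is available on the unit circle only, hence the rescaled polynomial `P (ρ z)`.
    set Q : Polynomial ℂ := P.comp (Polynomial.C (ρ : ℂ) * Polynomial.X) with hQ
    have hQc : ∀ i, Q.coeff i = P.coeff i * (ρ : ℂ) ^ i := fun i => by
      rw [hQ, Polynomial.comp_C_mul_X_coeff]
    have hpar := Q.sum_sq_norm_coeff_eq_circleAverage
    have hcirc : Real.circleAverage (fun z => ‖f z * P.eval z ^ 2‖) 0 ρ ≤
        Real.circleAverage (fun z => ‖Q.eval z‖ ^ 2) 0 1 := by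
      have e : Real.circleAverage (fun z => ‖Q.eval z‖ ^ 2) 0 1 =
          Real.circleAverage (fun z => ‖P.eval z‖ ^ 2) 0 ρ := by
        simp [Real.circleAverage, hQ, circleMap]
      rw [e]
      have hnorm : ∀ z ∈ Metric.sphere (0 : ℂ) |ρ|, ‖z‖ < 1 := by
        intro z hz
        simp only [mem_sphere_iff_norm, sub_zero, abs_of_pos h0] at hz
        rwa [hz]
      refine Real.circleAverage_mono ?_ ?_ ?_
      · refine ContinuousOn.circleIntegrable' ?_
        have hfc : ContinuousOn f (Metric.sphere (0 : ℂ) |ρ|) := fun z hz =>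
          (differentiableAt_of_hasSum hf (hnorm z hz)).continuousAt.continuousWithinAt
        exact (hfc.mul (by fun_prop)).norm
      · refine ContinuousOn.circleIntegrable' ?_
        fun_prop
      · intro z hz
        simp only [norm_mul, norm_pow]
        exact mul_le_of_le_one_left (by positivity) (hbd z (hnorm z hz))
    refine hcirc.trans ?_
    rw [← hpar]
    have hsub : Q.support ⊆ P.support := by
      intro i hi
      rw [Polynomial.mem_support_iff] at hi ⊢
      rw [hQc] at hi
      exact left_ne_zero_of_mul hi
    refine (Finset.sum_le_sum_of_subset_of_nonneg hsub fun _ _ _ => by positivity).trans ?_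
    refine Finset.sum_le_sum fun i _ => ?_
    rw [hQc, norm_mul, norm_pow, Complex.norm_real, Real.norm_of_nonneg h0.le]
    gcongr
    exact mul_le_of_le_one_right (norm_nonneg _) (pow_le_one₀ h0.le h1.le)
  have hlim : Filter.Tendsto (fun ρ : ℝ => ‖b n‖ * ρ ^ n) (nhdsWithin 1 (Set.Iio 1))
      (nhds (‖b n‖ * 1 ^ n)) :=
    (Continuous.tendsto (by fun_prop) 1).mono_left nhdsWithin_le_nhds
  rw [one_pow, mul_one] at hlim
  refine le_of_tendsto hlim ?_
  filter_upwards [Ioo_mem_nhdsLT (zero_lt_one' ℝ)] with ρ hρ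
  exact key ρ hρ.1 hρ.2

/-! ### Carlson's inequalities -/

lemma sum_support_sq_eq_sum_range (P : Polynomial ℂ) (M : ℕ) (h : ∀ i, M ≤ i → P.coeff i = 0) :
    ∑ i ∈ P.support, ‖P.coeff i‖ ^ 2 = ∑ i ∈ Finset.range M, ‖P.coeff i‖ ^ 2 := by
  refine Finset.sum_subset (fun i hi => ?_) (fun i _ hi => ?_)
  · rw [Finset.mem_range]
    by_contra! hc
    exact Polynomial.mem_support_iff.1 hi (h i hc)
  · simp [Polynomial.notMem_support_iff.1 hi]

lemma exists_unimodular (z : ℂ) : ∃ lam : ℂ, ‖lam‖ = 1 ∧ z = lam * ‖z‖ := by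
  rcases eq_or_ne z 0 with rfl | hz
  · exact ⟨1, by simp, by simp⟩
  · have : (‖z‖ : ℂ) ≠ 0 := by simpa using hz
    exact ⟨z / ‖z‖, by simp [hz], by field_simp⟩

/-- The polynomial `λ ∑_{i < K} conj a_{K-1-i} zⁱ`, the reversed conjugate of a Taylor
section. -/
noncomputable def revSection (a : ℕ → ℂ) (lam : ℂ) (K : ℕ) : Polynomial ℂ :=
  ∑ i ∈ Finset.range K, Polynomial.monomial i (lam * starRingEnd ℂ (a (K - 1 - i)))

lemma coeff_revSection (a : ℕ → ℂ) (lam : ℂ) (K i : ℕ) :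
    (revSection a lam K).coeff i =
      if i < K then lam * starRingEnd ℂ (a (K - 1 - i)) else 0 := by
  simp [revSection, Polynomial.coeff_monomial]

lemma sum_sq_coeff_revSection (a : ℕ → ℂ) {lam : ℂ} (hl : ‖lam‖ = 1) (K : ℕ) :
    ∑ i ∈ Finset.range K, ‖(revSection a lam K).coeff i‖ ^ 2 =
      ∑ i ∈ Finset.range K, ‖a i‖ ^ 2 := by
  rw [← Finset.sum_range_reflect (fun i => ‖a i‖ ^ 2)]
  refine Finset.sum_congr rfl fun i hi => ?_
  rw [coeff_revSection, if_pos (Finset.mem_range.1 hi)]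
  simp [hl]

lemma coeff_mk_mul_revSection (a : ℕ → ℂ) (lam : ℂ) (K : ℕ) :
    PowerSeries.coeff K (PowerSeries.mk a * (revSection a lam (K + 1) : PowerSeries ℂ)) =
      lam * ((∑ i ∈ Finset.range (K + 1), ‖a i‖ ^ 2 : ℝ) : ℂ) := by
  rw [PowerSeries.coeff_mul, Finset.Nat.sum_antidiagonal_eq_sum_range_succ_mk]
  push_cast
  rw [Finset.mul_sum]
  refine Finset.sum_congr rfl fun i hi => ?_
  have hi' : i ≤ K := by simpa [Nat.lt_succ_iff] using hi
  have : K + 1 - 1 - (K - i) = i := by omega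
  simp only [PowerSeries.coeff_mk, coeff_revSection, this]
  rw [if_pos (by omega), ← Complex.mul_conj']
  ring

/-- Carlson's inequality for odd indices: the test polynomial is
`P = 1 + λ ∑_{i ≤ k} conj a_i z^{2k+1-i}`. -/
lemma carlson_odd {f : ℂ → ℂ} {a : ℕ → ℂ}
    (hf : ∀ z : ℂ, ‖z‖ < 1 → HasSum (fun n => a n * z ^ n) (f z))
    (hbd : ∀ z : ℂ, ‖z‖ < 1 → ‖f z‖ ≤ 1) (k : ℕ) :
    ‖a (2 * k + 1)‖ ≤ 1 - ∑ i ∈ Finset.range (k + 1), ‖a i‖ ^ 2 := by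
  obtain ⟨lam, hl, hz⟩ := exists_unimodular (a (2 * k + 1))
  set s := ∑ i ∈ Finset.range (k + 1), ‖a i‖ ^ 2 with hs
  set S := revSection a lam (k + 1) with hS
  have h := norm_coeff_mul_sq_le hf hbd (1 + Polynomial.X ^ (k + 1) * S) (2 * k + 1)
  have hco : PowerSeries.coeff (2 * k + 1) (PowerSeries.mk a *
      ((1 + Polynomial.X ^ (k + 1) * S : Polynomial ℂ) : PowerSeries ℂ) ^ 2) =
      lam * ((‖a (2 * k + 1)‖ + 2 * s : ℝ) : ℂ) := by
    have e : PowerSeries.mk a *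
        ((1 + Polynomial.X ^ (k + 1) * S : Polynomial ℂ) : PowerSeries ℂ) ^ 2 =
        PowerSeries.mk a + PowerSeries.X ^ (k + 1) * (PowerSeries.mk a * (S : PowerSeries ℂ))
          + PowerSeries.X ^ (k + 1) * (PowerSeries.mk a * (S : PowerSeries ℂ))
          + PowerSeries.X ^ (2 * k + 2) * (PowerSeries.mk a * (S : PowerSeries ℂ) ^ 2) := by
      push_cast
      ring
    rw [e]
    simp only [map_add, PowerSeries.coeff_X_pow_mul']
    rw [if_pos (by omega), if_neg (by omega), show 2 * k + 1 - (k + 1) = k by omega, hS,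
      coeff_mk_mul_revSection, ← hs, PowerSeries.coeff_mk]
    nth_rewrite 1 [hz]
    push_cast
    ring
  have hsum : ∑ i ∈ (1 + Polynomial.X ^ (k + 1) * S).support,
      ‖(1 + Polynomial.X ^ (k + 1) * S).coeff i‖ ^ 2 = 1 + s := by
    rw [sum_support_sq_eq_sum_range _ ((k + 1) + (k + 1)), Finset.sum_range_add]
    · congr 1
      · rw [Finset.sum_range_succ', Finset.sum_eq_zero]
        · simp
        · intro i hi
          have := Finset.mem_range.1 hi
          simp [Polynomial.coeff_X_pow_mul', Polynomial.coeff_one, this.not_ge]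
      · rw [hs, ← sum_sq_coeff_revSection a hl]
        refine Finset.sum_congr rfl fun i hi => ?_
        simp [Polynomial.coeff_X_pow_mul', Polynomial.coeff_one, hS]
    · intro i hi
      have h1 : i ≠ 0 := by omega
      have h2 : ¬ (i - (k + 1) < k + 1) := by omega
      simp [Polynomial.coeff_X_pow_mul', Polynomial.coeff_one, hS, coeff_revSection, h1]
      omega
  have hs0 : 0 ≤ s := by positivity
  rw [hco, hsum, norm_mul, hl, one_mul, Complex.norm_real, Real.norm_of_nonneg (by positivity)] at h
  linarith

/-- Carlson's inequality for even indices `2k`, `k = m + 1`: the test polynomial is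
`P = 1 + c z^k + λ ∑_{i < k} conj a_i z^{2k-i}` with `c = λ conj a_k / (1 + |a₀|)`. -/
lemma carlson_even {f : ℂ → ℂ} {a : ℕ → ℂ}
    (hf : ∀ z : ℂ, ‖z‖ < 1 → HasSum (fun n => a n * z ^ n) (f z))
    (hbd : ∀ z : ℂ, ‖z‖ < 1 → ‖f z‖ ≤ 1) (m : ℕ) :
    ‖a (2 * m + 2)‖ ≤ 1 - ∑ i ∈ Finset.range (m + 1), ‖a i‖ ^ 2
      - ‖a (m + 1)‖ ^ 2 / (1 + ‖a 0‖) := by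
  obtain ⟨lam, hl, hz⟩ := exists_unimodular (a (2 * m + 2))
  set s := ∑ i ∈ Finset.range (m + 1), ‖a i‖ ^ 2 with hs
  set S := revSection a lam (m + 1) with hS
  set x : ℝ := 1 / (1 + ‖a 0‖) with hx
  have hx0 : 0 ≤ x := by positivity
  set c : ℂ := lam * (x * starRingEnd ℂ (a (m + 1))) with hc
  set A : ℝ := ‖a (m + 1)‖ ^ 2 with hA
  set P : Polynomial ℂ :=
    1 + Polynomial.C c * Polynomial.X ^ (m + 1) + Polynomial.X ^ (m + 2) * S with hP
  have h := norm_coeff_mul_sq_le hf hbd P (2 * m + 2)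
  have hco : PowerSeries.coeff (2 * m + 2) (PowerSeries.mk a * (P : PowerSeries ℂ) ^ 2) =
      lam * ((‖a (2 * m + 2)‖ + 2 * s + 2 * x * A : ℝ) : ℂ) + c ^ 2 * a 0 := by
    have e : PowerSeries.mk a * (P : PowerSeries ℂ) ^ 2 =
        PowerSeries.mk a + PowerSeries.X ^ (m + 2) * (PowerSeries.mk a * (S : PowerSeries ℂ))
          + PowerSeries.X ^ (m + 2) * (PowerSeries.mk a * (S : PowerSeries ℂ))
          + PowerSeries.X ^ (m + 1) * (PowerSeries.C (2 * c) * PowerSeries.mk a)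
          + PowerSeries.X ^ (2 * m + 2) * (PowerSeries.C (c ^ 2) * PowerSeries.mk a)
          + PowerSeries.X ^ (2 * m + 3) * (PowerSeries.mk a * (S : PowerSeries ℂ) *
            (PowerSeries.C (2 * c) + PowerSeries.X * (S : PowerSeries ℂ))) := by
      rw [hP]
      push_cast [map_mul, map_pow]
      have h2 : (PowerSeries.C (2 : ℂ) : PowerSeries ℂ) = 2 := map_ofNat _ 2
      rw [h2]
      ring
    have hck : 2 * c * a (m + 1) = lam * ((2 * x * A : ℝ) : ℂ) := by
      rw [hc, hA]
      push_cast
      rw [← Complex.mul_conj']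
      ring
    rw [e]
    simp only [map_add, PowerSeries.coeff_X_pow_mul']
    rw [if_pos (by omega), if_pos (by omega), if_pos (by omega), if_neg (by omega),
      show 2 * m + 2 - (m + 2) = m by omega, show 2 * m + 2 - (m + 1) = m + 1 by omega,
      Nat.sub_self, hS, coeff_mk_mul_revSection, ← hs]
    simp only [PowerSeries.coeff_C_mul, PowerSeries.coeff_mk]
    rw [hck]
    nth_rewrite 1 [hz]
    push_cast
    ring
  have hcn : ‖c‖ ^ 2 = x ^ 2 * A := by
    rw [hc, hA]
    simp [hl, mul_pow]
  have hsum : ∑ i ∈ P.support, ‖P.coeff i‖ ^ 2 = 1 + x ^ 2 * A + s := by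
    rw [sum_support_sq_eq_sum_range _ ((m + 1 + 1) + (m + 1)), Finset.sum_range_add,
      Finset.sum_range_succ]
    · congr 1
      · congr 1
        · rw [Finset.sum_range_succ', Finset.sum_eq_zero]
          · simp [hP]
          · intro i hi
            have := Finset.mem_range.1 hi
            have h1 : i ≠ m := by omega
            have h2 : ¬ (m + 2 ≤ i + 1) := by omega
            simp [hP, Polynomial.coeff_X_pow_mul', Polynomial.coeff_one, Polynomial.coeff_X_pow,
              h1, h2]
        · rw [← hcn]
          simp [hP, Polynomial.coeff_X_pow_mul', Polynomial.coeff_one]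
      · rw [hs, ← sum_sq_coeff_revSection a hl]
        refine Finset.sum_congr rfl fun i hi => ?_
        have h1 : m + 1 + 1 + i ≠ m + 1 := by omega
        simp [hP, Polynomial.coeff_X_pow_mul', Polynomial.coeff_one, Polynomial.coeff_X_pow,
          hS, h1]
    · intro i hi
      have h1 : i ≠ 0 := by omega
      have h2 : ¬ (i - (m + 2) < m + 1) := by omega
      have h3 : i ≠ m + 1 := by omega
      simp [hP, Polynomial.coeff_X_pow_mul', Polynomial.coeff_one, Polynomial.coeff_X_pow,
        hS, coeff_revSection, h1, h3]
      omega
  have hs0 : 0 ≤ s := by positivity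
  have hA0 : 0 ≤ A := by positivity
  rw [hco, hsum] at h
  have htri : ‖a (2 * m + 2)‖ + 2 * s + 2 * x * A - x ^ 2 * A * ‖a 0‖ ≤ 1 + x ^ 2 * A + s := by
    refine le_trans ?_ h
    refine le_trans (le_of_eq ?_) (norm_sub_le_norm_add _ _)
    rw [norm_mul, hl, one_mul, Complex.norm_real, Real.norm_of_nonneg (by positivity),
      norm_mul, norm_pow, hcn]
  have hxx : x * (1 + ‖a 0‖) = 1 := by
    rw [hx]
    field_simp
  have hdiv : A / (1 + ‖a 0‖) = x * A := by rw [hx]; ring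
  have : x ^ 2 * A * (1 + ‖a 0‖) = x * A := by
    linear_combination x * A * hxx
  rw [hdiv]
  linarith

/-! ### Summation of the tail -/

/-- Here `N = M + 1`, so `⌊(N-1)/2⌋ = M / 2`. The difference of the two sides of the
tail inequality is nonincreasing in `N` (each step is one of Carlson's inequalities) and tends
to `0`, so it is nonnegative. -/
lemma tail_of_carlson {α : ℕ → ℝ} (h0 : ∀ n, 0 ≤ α n)
    (hodd : ∀ k, α (2 * k + 1) ≤ 1 - ∑ i ∈ Finset.range (k + 1), α i ^ 2)
    (heven : ∀ m, α (2 * m + 2) ≤ 1 - ∑ i ∈ Finset.range (m + 1), α i ^ 2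
      - α (m + 1) ^ 2 / (1 + α 0))
    {r : ℝ} (hr0 : 0 ≤ r) (hr : r < 1) (hsum : Summable fun n => α n * r ^ n) (M : ℕ) :
    ∑' n : ℕ, α (n + (M + 1)) * r ^ (n + (M + 1)) ≤
      (1 - ∑ i ∈ Finset.range (M / 2 + 1), α i ^ 2) * (r ^ (M + 1) / (1 - r)) -
      (1 / (1 + α 0) + r / (1 - r)) *
        ∑' n : ℕ, α (n + (M / 2 + 1)) ^ 2 * r ^ (2 * (n + (M / 2 + 1))) := by
  set s : ℕ → ℝ := fun k => ∑ i ∈ Finset.range k, α i ^ 2 with hs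
  have hs0 : ∀ k, 0 ≤ s k := fun k => Finset.sum_nonneg fun _ _ => by positivity
  have hs1 : ∀ k, s (k + 1) ≤ 1 := fun k => by linarith [hodd k, h0 (2 * k + 1)]
  have hα1 : ∀ n, α n ≤ 1 := fun n => by
    have h1 : α n ^ 2 ≤ s (n + 1) :=
      Finset.single_le_sum (f := fun i => α i ^ 2) (fun _ _ => by positivity)
        (Finset.self_mem_range_succ n)
    have := h1.trans (hs1 n)
    exact (sq_le_one_iff₀ (h0 n)).1 this
  set u : ℕ → ℝ := fun n => α n ^ 2 * r ^ (2 * n) with hu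
  have husum : Summable u := by
    refine Summable.of_nonneg_of_le (fun n => by positivity) (fun n => ?_) hsum
    have h1 : 0 ≤ α n * r ^ n := mul_nonneg (h0 n) (by positivity)
    have h2 : α n * r ^ n ≤ 1 := mul_le_one₀ (hα1 n) (by positivity) (pow_le_one₀ hr0 hr.le)
    calc u n = (α n * r ^ n) * (α n * r ^ n) := by rw [hu]; ring
      _ ≤ α n * r ^ n := mul_le_of_le_one_left h1 h2
  set T : ℕ → ℝ := fun N => ∑' n : ℕ, α (n + N) * r ^ (n + N) with hT
  set U : ℕ → ℝ := fun N => ∑' n : ℕ, u (n + N) with hU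
  have hTs : ∀ N, T N = α N * r ^ N + T (N + 1) := fun N => by
    have := ((summable_nat_add_iff N).2 hsum).tsum_eq_zero_add
    simp only [zero_add] at this
    rw [hT]
    simp only
    rw [this]
    congr 2
    ext n
    rw [show n + 1 + N = n + (N + 1) by ring]
  have hUs : ∀ N, U N = u N + U (N + 1) := fun N => by
    have := ((summable_nat_add_iff N).2 husum).tsum_eq_zero_add
    simp only [zero_add] at this
    rw [hU]
    simp only
    rw [this]
    congr 2
    ext n
    rw [show n + 1 + N = n + (N + 1) by ring]
  set K : ℝ := 1 / (1 + α 0) + r / (1 - r) with hK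
  set D : ℕ → ℝ := fun M =>
    (1 - s (M / 2 + 1)) * (r ^ (M + 1) / (1 - r)) - K * U (M / 2 + 1) - T (M + 1) with hD
  have h1r : (1 - r) ≠ 0 := by linarith
  have hα0 : (1 + α 0) ≠ 0 := by linarith [h0 0]
  have hanti : Antitone D := by
    refine antitone_nat_of_succ_le fun M => ?_
    obtain ⟨t, rfl | rfl⟩ := Nat.even_or_odd' M
    · have e1 : 2 * t / 2 = t := by omega
      have e2 : (2 * t + 1) / 2 = t := by omega
      simp only [hD, e1, e2]
      rw [hTs (2 * t + 1)]
      have h := mul_le_mul_of_nonneg_right (hodd t) (pow_nonneg hr0 (2 * t + 1))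
      have e : (1 - s (t + 1)) * (r ^ (2 * t + 1) / (1 - r)) =
          (1 - s (t + 1)) * r ^ (2 * t + 1)
            + (1 - s (t + 1)) * (r ^ (2 * t + 1 + 1) / (1 - r)) := by
        field_simp
        ring
      linarith
    · have e1 : (2 * t + 1) / 2 = t := by omega
      have e2 : (2 * t + 1 + 1) / 2 = t + 1 := by omega
      simp only [hD, e1, e2]
      rw [hTs (2 * t + 1 + 1), hUs (t + 1)]
      have h := mul_le_mul_of_nonneg_right (heven t) (pow_nonneg hr0 (2 * t + 2))
      have es : s (t + 1 + 1) = s (t + 1) + α (t + 1) ^ 2 := Finset.sum_range_succ _ _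
      have e : (1 - s (t + 1)) * (r ^ (2 * t + 1 + 1) / (1 - r)) - K * u (t + 1)
          - (1 - s (t + 1 + 1)) * (r ^ (2 * t + 1 + 1 + 1) / (1 - r)) =
          (1 - s (t + 1) - α (t + 1) ^ 2 / (1 + α 0)) * r ^ (2 * t + 2) := by
        rw [es, hK, hu]
        field_simp
        ring
      linarith
  have hhalf : Filter.Tendsto (fun M : ℕ => M / 2 + 1) Filter.atTop Filter.atTop :=
    Filter.tendsto_atTop_atTop.2 fun b => ⟨2 * b, fun M hM => by omega⟩
  have hTlim : Filter.Tendsto (fun M => T (M + 1)) Filter.atTop (nhds 0) :=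
    (tendsto_sum_nat_add fun n => α n * r ^ n).comp (Filter.tendsto_add_atTop_nat 1)
  have hUlim : Filter.Tendsto (fun M : ℕ => U (M / 2 + 1)) Filter.atTop (nhds 0) :=
    (tendsto_sum_nat_add u).comp hhalf
  have hRlim : Filter.Tendsto (fun M : ℕ => (1 - s (M / 2 + 1)) * (r ^ (M + 1) / (1 - r)))
      Filter.atTop (nhds 0) := by
    have hp : Filter.Tendsto (fun M : ℕ => r ^ (M + 1) / (1 - r)) Filter.atTop (nhds 0) := by
      simpa using ((tendsto_pow_atTop_nhds_zero_of_lt_one hr0 hr).comp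
        (Filter.tendsto_add_atTop_nat 1)).div_const (1 - r)
    have hnn : ∀ M : ℕ, 0 ≤ r ^ (M + 1) / (1 - r) := fun M =>
      div_nonneg (pow_nonneg hr0 _) (by linarith)
    refine squeeze_zero (fun M => mul_nonneg (by linarith [hs1 (M / 2)]) (hnn M))
      (fun M => mul_le_of_le_one_left (hnn M) (by linarith [hs0 (M / 2 + 1)])) hp
  have hDlim : Filter.Tendsto D Filter.atTop (nhds 0) := by
    simpa using (hRlim.sub (hUlim.const_mul K)).sub hTlim
  have := hanti.le_of_tendsto hDlim M
  simp only [hD] at this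
  linarith

/-- Refined tail inequality of Liu, Liu and Ponnusamy. -/
theorem refined_tail_inequality (f : ℂ → ℂ) (a : ℕ → ℂ)
    (hf : ∀ z : ℂ, ‖z‖ < 1 → HasSum (fun n => a n * z ^ n) (f z))
    (hbd : ∀ z : ℂ, ‖z‖ < 1 → ‖f z‖ ≤ 1)
    (N : ℕ) (hN : 1 ≤ N) (r : ℝ) (hr0 : 0 ≤ r) (hr : r < 1) :
    ∑' n : ℕ, ‖a (n + N)‖ * r ^ (n + N) +
      (if (N - 1) / 2 = 0 then (0 : ℝ) else 1) *
        ∑ n ∈ Finset.Icc 1 ((N - 1) / 2), ‖a n‖ ^ 2 * (r ^ N / (1 - r)) +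
      (1 / (1 + ‖a 0‖) + r / (1 - r)) *
        ∑' n : ℕ, ‖a (n + (N - 1) / 2 + 1)‖ ^ 2 * r ^ (2 * (n + (N - 1) / 2 + 1)) ≤
    (1 - ‖a 0‖ ^ 2) * r ^ N / (1 - r) := by
  obtain ⟨M, rfl⟩ : ∃ M, N = M + 1 := ⟨N - 1, by omega⟩
  have hsum : Summable fun n => ‖a n‖ * r ^ n := by
    have := (hf r (by simpa [abs_of_nonneg hr0] using hr)).summable.norm
    simpa [abs_of_nonneg hr0] using this
  have h := tail_of_carlson (fun n => norm_nonneg (a n)) (carlson_odd hf hbd)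
    (carlson_even hf hbd) hr0 hr hsum M
  simp only [Nat.add_sub_cancel]
  -- The factor `sgn t` is redundant: the finite sum is empty when `t = 0`.
  have hfin : (if M / 2 = 0 then (0 : ℝ) else 1) *
      ∑ n ∈ Finset.Icc 1 (M / 2), ‖a n‖ ^ 2 * (r ^ (M + 1) / (1 - r)) =
      (∑ i ∈ Finset.range (M / 2 + 1), ‖a i‖ ^ 2 - ‖a 0‖ ^ 2) * (r ^ (M + 1) / (1 - r)) := by
    have e : ∑ i ∈ Finset.range (M / 2 + 1), ‖a i‖ ^ 2 - ‖a 0‖ ^ 2 =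
        ∑ n ∈ Finset.Icc 1 (M / 2), ‖a n‖ ^ 2 := by
      rw [Finset.range_eq_Ico, Finset.sum_eq_sum_Ico_succ_bot (Nat.succ_pos _)]
      simp only [zero_add, add_sub_cancel_left]
      rfl
    rw [e, Finset.sum_mul]
    split_ifs with ht
    · simp [ht]
    · rw [one_mul]
  rw [hfin, mul_div_assoc]
  simp only [add_assoc] at h ⊢
  linarith
end

section
/- If f(z) = Σ_{n≥0} a_n z^n is analytic on the unit disk with |f(z)| ≤ 1, and S_r = π Σ_{n≥1} n|a_n|^2 r^{2n}, then for 0 ≤ r ≤ 1/√2: S_r/(π − S_r) ≤ r^2 (1 − |a_0|^2)^2 / ((1 − r^2)(1 − r^2 |a_0|^4)). -/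
/-!
Write `ρ = r²`, `α = |a₀|`. Since `1 - ρ(1-α²)²/(1-α²ρ)² = (1-ρ)(1-α⁴ρ)/(1-α²ρ)²` and
`x ↦ x/(1-x)` increases on `x < 1`, the claim is equivalent to the sharp area bound
`∑ n|aₙ|²ρⁿ ≤ ρ(1-α²)²/(1-α²ρ)²` for `ρ ≤ 1/2`. The right side is `∑ n|bₙ|²ρⁿ` for the Möbius map
with `|b₀| = α`, `|bₙ| = (1-α²)αⁿ⁻¹`.

The coefficients of `f` are dominated by those of the Möbius map in the sense of partial sums of
squares, `∑_{1≤k≤n} |aₖ|² ≤ ∑_{1≤k≤n} |bₖ|²` (Rogosinski, `coeff_sum_le_of_le_one`). For `ρ ≤ 1/2`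
the weights `nρⁿ`, `n ≥ 1`, decrease, so Abel summation (`abel_sum_le`) turns this domination into
the area bound.

The domination follows from a recursion (`coeff_sum_succ_le`). Let `ω = (f-a₀)/(1-ā₀f)`, so that
`|ω| ≤ 1` and `ω(0) = 0`, and let `p` be the Taylor polynomial of `1-ā₀f` of degree `n`. As
`f - a₀ = ω(1-ā₀f)`, the functions `f - a₀` and `ωp` agree up to order `n+1`. Parseval on the unit
circle (after a dilation that makes everything continuous up to the boundary) then gives
`∑_{1≤k≤n+1} |aₖ|² ≤ ‖ωp‖² ≤ ‖p‖² = (1-α²)² + α² ∑_{1≤k≤n} |aₖ|²`.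
-/

open Real Metric Finset ComplexConjugate

/-- The function `z ↦ ∑ₖ b_{k+m} zᵏ`: the power series with coefficients `b`, with its first `m`
terms removed and divided by `zᵐ`. For `m = 0` it is the power series itself. -/
noncomputable def seriesTail (b : ℕ → ℂ) (m : ℕ) (z : ℂ) : ℂ := ∑' k, b (k + m) * z ^ k

lemma summable_coeff_mul_pow {b : ℕ → ℂ} (hb : Summable fun k => ‖b k‖) {z : ℂ} (hz : ‖z‖ ≤ 1) :
    Summable fun k => b k * z ^ k := by
  refine Summable.of_norm_bounded hb fun k => ?_
  rw [norm_mul, norm_pow]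
  exact mul_le_of_le_one_right (norm_nonneg _) (pow_le_one₀ (norm_nonneg _) hz)

lemma seriesTail_zero_eq {b : ℕ → ℂ} (hb : Summable fun k => ‖b k‖) (m : ℕ) {z : ℂ}
    (hz : ‖z‖ ≤ 1) :
    seriesTail b 0 z = ∑ k ∈ range m, b k * z ^ k + z ^ m * seriesTail b m z := by
  simp only [seriesTail, add_zero]
  rw [← (summable_coeff_mul_pow hb hz).sum_add_tsum_nat_add m, ← tsum_mul_left]
  congr 1
  refine tsum_congr fun k => ?_
  ring

lemma diffContOnCl_seriesTail {b : ℕ → ℂ} (hb : Summable fun k => ‖b k‖) (m : ℕ) :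
    DiffContOnCl ℂ (seriesTail b m) (ball 0 1) := by
  have hb' : Summable fun k => ‖b (k + m)‖ := (summable_nat_add_iff m).2 hb
  have key : ∀ k, ∀ z : ℂ, ‖z‖ ≤ 1 → ‖b (k + m) * z ^ k‖ ≤ ‖b (k + m)‖ := fun k z hz => by
    rw [norm_mul, norm_pow]
    exact mul_le_of_le_one_right (norm_nonneg _) (pow_le_one₀ (norm_nonneg _) hz)
  refine ⟨Complex.differentiableOn_tsum_of_summable_norm hb' (fun k => by fun_prop) isOpen_ball
    fun k z hz => key k z (by simpa using (mem_ball_zero_iff.1 hz).le), ?_⟩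
  rw [closure_ball _ one_ne_zero]
  exact continuousOn_tsum (fun k => by fun_prop) hb'
    fun k z hz => key k z (by simpa using hz)

lemma circleIntegrable_norm_sq {g : ℂ → ℂ} (hg : ContinuousOn g (closedBall 0 1)) :
    CircleIntegrable (fun z => ‖g z‖ ^ 2) 0 1 :=
  ((hg.mono sphere_subset_closedBall).norm.pow 2).circleIntegrable zero_le_one

/-- Orthogonality in `H²`: on the unit circle a polynomial of degree `< m` is orthogonal to
`zᵐ τ(z)`, because `conj z = z⁻¹` there turns the inner product into the mean of a holomorphic
function vanishing at `0`. -/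
lemma circleAverage_poly_add (c : ℕ → ℂ) (m : ℕ) {τ : ℂ → ℂ} (hτ : DiffContOnCl ℂ τ (ball 0 1)) :
    circleAverage (fun z => ‖∑ k ∈ range m, c k * z ^ k + z ^ m * τ z‖ ^ 2) 0 1 =
      circleAverage (fun z => ‖∑ k ∈ range m, c k * z ^ k‖ ^ 2) 0 1 +
        circleAverage (fun z => ‖τ z‖ ^ 2) 0 1 := by
  have hτc : ContinuousOn τ (closedBall 0 1) := by
    have := hτ.continuousOn
    rwa [closure_ball _ one_ne_zero] at this
  set Q : ℂ → ℂ := fun z => (∑ k ∈ range m, conj (c k) * z ^ (m - k)) * τ z with hQ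
  have hQd : DiffContOnCl ℂ Q (ball 0 |1|) := by
    rw [abs_one]
    have : Differentiable ℂ fun z : ℂ => ∑ k ∈ range m, conj (c k) * z ^ (m - k) := by fun_prop
    exact this.diffContOnCl.smul hτ
  have hQ0 : Q 0 = 0 := by
    simp only [hQ]
    rw [Finset.sum_eq_zero, zero_mul]
    intro k hk
    have : m - k ≠ 0 := by have := mem_range.1 hk; omega
    simp [this]
  have hQc : ContinuousOn Q (closedBall 0 1) := by
    simp only [hQ]; fun_prop
  have hQi : CircleIntegrable Q 0 1 :=
    (hQc.mono sphere_subset_closedBall).circleIntegrable zero_le_one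
  have hre : circleAverage (fun z => 2 * (Q z).re) 0 1 = 0 := by
    have h1 := ContinuousLinearMap.circleAverage_comp_comm Complex.reCLM hQi
    rw [hQd.circleAverage, hQ0] at h1
    have h2 := circleAverage_fun_smul (a := (2 : ℝ)) (f := fun z => (Q z).re) (c := 0) (R := 1)
    simp only [smul_eq_mul] at h2
    rw [h2]
    have h3 : circleAverage (fun z => (Q z).re) 0 1 = 0 := h1
    rw [h3, mul_zero]
  have hreI : CircleIntegrable (fun z => 2 * (Q z).re) 0 1 := by
    refine ContinuousOn.circleIntegrable zero_le_one ?_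
    have := hQc.mono (sphere_subset_closedBall)
    exact continuousOn_const.mul (Complex.continuous_re.comp_continuousOn this)
  have hP : CircleIntegrable (fun z => ‖∑ k ∈ range m, c k * z ^ k‖ ^ 2) 0 1 :=
    circleIntegrable_norm_sq (by fun_prop)
  have hT := circleIntegrable_norm_sq hτc
  have hPT : CircleIntegrable
      (fun z => ‖∑ k ∈ range m, c k * z ^ k‖ ^ 2 + ‖τ z‖ ^ 2) 0 1 := hP.add hT
  rw [← circleAverage_fun_add hP hT,
    ← add_zero (circleAverage (fun z => ‖∑ k ∈ range m, c k * z ^ k‖ ^ 2 + ‖τ z‖ ^ 2) 0 1), ← hre,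
    ← circleAverage_fun_add hPT hreI]
  refine circleAverage_congr_sphere fun z hz => ?_
  have hz1 : ‖z‖ = 1 := by simpa using hz
  have hzz : conj z * z = 1 := by
    rw [mul_comm, Complex.mul_conj, Complex.normSq_eq_norm_sq, hz1]; simp
  have hPQ : conj (∑ k ∈ range m, c k * z ^ k) * (z ^ m * τ z) = Q z := by
    simp only [hQ, map_sum, Finset.sum_mul]
    refine Finset.sum_congr rfl fun k hk => ?_
    obtain ⟨j, rfl⟩ := Nat.exists_eq_add_of_lt (mem_range.1 hk)
    have : k + j + 1 - k = j + 1 := by omega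
    rw [this, map_mul, map_pow]
    calc conj (c k) * conj z ^ k * (z ^ (k + j + 1) * τ z)
        = conj (c k) * (conj z * z) ^ k * z ^ (j + 1) * τ z := by ring
      _ = _ := by rw [hzz]; ring
  have e := Complex.normSq_add (∑ k ∈ range m, c k * z ^ k) (z ^ m * τ z)
  have e2 : (∑ k ∈ range m, c k * z ^ k) * conj (z ^ m * τ z) = conj (Q z) := by
    rw [← hPQ, map_mul (starRingEnd ℂ) (conj _), Complex.conj_conj]
  rw [e2, Complex.conj_re] at e
  simp only [Complex.normSq_eq_norm_sq, norm_mul, norm_pow, hz1, one_pow, one_mul] at e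
  exact e

/-- Parseval for polynomials on the unit circle. -/
lemma circleAverage_poly (c : ℕ → ℂ) (m : ℕ) :
    circleAverage (fun z => ‖∑ k ∈ range m, c k * z ^ k‖ ^ 2) 0 1 =
      ∑ k ∈ range m, ‖c k‖ ^ 2 := by
  induction m with
  | zero => simp [circleAverage_const]
  | succ m ih =>
    have h := circleAverage_poly_add c m (τ := fun _ => c m) diffContOnCl_const
    rw [circleAverage_const, ih] at h
    rw [Finset.sum_range_succ (fun k => ‖c k‖ ^ 2), ← h]
    congr 1
    funext z
    rw [Finset.sum_range_succ, mul_comm (z ^ m)]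

/-- The recursion behind Rogosinski's inequality, obtained by comparing the `L²` norms of `ωp` and
`p`, where `ω = (g - b₀)/(1 - conj b₀ g)` and `p` is the Taylor polynomial of `1 - conj b₀ g`. -/
lemma coeff_sum_succ_le {b : ℕ → ℂ} (hb : Summable fun k => ‖b k‖)
    (hg : ∀ z : ℂ, ‖z‖ ≤ 1 → ‖seriesTail b 0 z‖ < 1) (n : ℕ) :
    ∑ k ∈ range (n + 1), ‖b (k + 1)‖ ^ 2 ≤
      (1 - ‖b 0‖ ^ 2) ^ 2 + ‖b 0‖ ^ 2 * ∑ k ∈ range n, ‖b (k + 1)‖ ^ 2 := by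
  set g := seriesTail b 0 with hgdef
  have hb0 : ‖b 0‖ < 1 := by
    have h := hg 0 (by simp)
    have h2 := seriesTail_zero_eq hb 1 (z := 0) (by simp)
    rw [hgdef, h2] at h
    simpa using h
  have hh : ∀ z : ℂ, ‖z‖ ≤ 1 → 1 - conj (b 0) * g z ≠ 0 := fun z hz h => by
    have h1 : ‖conj (b 0) * g z‖ = 1 := by rw [← sub_eq_zero.1 h, norm_one]
    rw [norm_mul, RCLike.norm_conj] at h1
    nlinarith [hg z hz, norm_nonneg (b 0), norm_nonneg (g z)]
  have hdg := diffContOnCl_seriesTail hb 0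
  set c : ℕ → ℂ := fun k => if k = 0 then 0 else b k with hc
  set d : ℕ → ℂ := fun k => if k = 0 then 1 - conj (b 0) * b 0 else -conj (b 0) * b k with hd
  -- The remainder in `ωp = P + zⁿ⁺² τ`, where `P` has coefficients `c`.
  set τ : ℂ → ℂ := fun z => seriesTail b (n + 2) z +
    conj (b 0) * (seriesTail b 1 z * seriesTail b (n + 1) z * (1 - conj (b 0) * g z)⁻¹) with hτdef
  have hτ : DiffContOnCl ℂ τ (ball 0 1) := by
    have hi : DiffContOnCl ℂ (fun z => (1 - conj (b 0) * g z)⁻¹) (ball 0 1) := by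
      refine DiffContOnCl.inv (diffContOnCl_const.sub (hdg.const_smul (conj (b 0)))) ?_
      intro z hz
      rw [closure_ball _ one_ne_zero] at hz
      exact hh z (by simpa using hz)
    exact (diffContOnCl_seriesTail hb (n + 2)).add
      ((((diffContOnCl_seriesTail hb 1).smul (diffContOnCl_seriesTail hb (n + 1))).smul
        hi).const_smul (conj (b 0)))
  have hcsum : ∀ z : ℂ, ∑ k ∈ range (n + 2), c k * z ^ k =
      ∑ k ∈ range (n + 2), b k * z ^ k - b 0 := fun z => by
    rw [Finset.sum_range_succ', Finset.sum_range_succ' (fun k => b k * z ^ k)]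
    simp [hc]
  have hdsum : ∀ z : ℂ, ∑ k ∈ range (n + 1), d k * z ^ k =
      1 - conj (b 0) * ∑ k ∈ range (n + 1), b k * z ^ k := fun z => by
    rw [Finset.sum_range_succ', Finset.sum_range_succ' (fun k => b k * z ^ k), mul_add,
      Finset.mul_sum]
    simp only [hd, Nat.add_eq_zero_iff, one_ne_zero, and_false, if_false, if_true, pow_zero,
      mul_one, neg_mul, Finset.sum_neg_distrib, mul_assoc]
    ring
  have hle : circleAverage
      (fun z => ‖∑ k ∈ range (n + 2), c k * z ^ k + z ^ (n + 2) * τ z‖ ^ 2) 0 1 ≤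
      circleAverage (fun z => ‖∑ k ∈ range (n + 1), d k * z ^ k‖ ^ 2) 0 1 := by
    have hτc : ContinuousOn τ (closedBall 0 1) := by
      have := hτ.continuousOn
      rwa [closure_ball _ one_ne_zero] at this
    refine circleAverage_mono (circleIntegrable_norm_sq (by fun_prop))
      (circleIntegrable_norm_sq (by fun_prop)) fun z hz => ?_
    have hz1 : ‖z‖ ≤ 1 := by
      have : ‖z‖ = 1 := by simpa using hz
      exact this.le
    have e1 := seriesTail_zero_eq hb 1 hz1
    have e2 := seriesTail_zero_eq hb (n + 1) hz1
    have e3 := seriesTail_zero_eq hb (n + 2) hz1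
    rw [← hgdef] at e1 e2 e3
    simp only [range_one, sum_singleton, pow_zero, mul_one, pow_one] at e1
    have hfac : ∑ k ∈ range (n + 2), c k * z ^ k + z ^ (n + 2) * τ z =
        (g z - b 0) / (1 - conj (b 0) * g z) * ∑ k ∈ range (n + 1), d k * z ^ k := by
      have h3 : ∑ k ∈ range (n + 2), b k * z ^ k = g z - z ^ (n + 2) * seriesTail b (n + 2) z := by
        rw [e3]; ring
      have h2 : ∑ k ∈ range (n + 1), b k * z ^ k = g z - z ^ (n + 1) * seriesTail b (n + 1) z := by
        rw [e2]; ring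
      have h1 : g z - b 0 = z * seriesTail b 1 z := by rw [e1]; ring
      have hne := hh z hz1
      rw [hcsum, hdsum, h2, h3]
      have hpoly : 1 - conj (b 0) * (g z - z ^ (n + 1) * seriesTail b (n + 1) z) =
          (1 - conj (b 0) * g z) + conj (b 0) * z ^ (n + 1) * seriesTail b (n + 1) z := by ring
      rw [hpoly, mul_add (_ / _), div_mul_cancel₀ _ hne, div_eq_mul_inv, h1, hτdef]
      simp only
      generalize (1 - conj (b 0) * g z)⁻¹ = u
      linear_combination h1
    have hω : ‖g z - b 0‖ ≤ ‖1 - conj (b 0) * g z‖ := by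
      have key : Complex.normSq (1 - conj (b 0) * g z) - Complex.normSq (g z - b 0) =
          (1 - Complex.normSq (b 0)) * (1 - Complex.normSq (g z)) := by
        simp only [Complex.normSq_apply, Complex.sub_re, Complex.sub_im, Complex.mul_re,
          Complex.mul_im, Complex.conj_re, Complex.conj_im, Complex.one_re, Complex.one_im]
        ring
      simp only [Complex.normSq_eq_norm_sq] at key
      refine le_of_sq_le_sq ?_ (norm_nonneg _)
      have h1 : ‖b 0‖ ^ 2 ≤ 1 := pow_le_one₀ (norm_nonneg _) hb0.le
      have h2 : ‖g z‖ ^ 2 ≤ 1 := pow_le_one₀ (norm_nonneg _) (hg z hz1).le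
      nlinarith [mul_nonneg (sub_nonneg.2 h1) (sub_nonneg.2 h2)]
    have hω1 : ‖(g z - b 0) / (1 - conj (b 0) * g z)‖ ≤ 1 := by
      rw [norm_div]
      exact div_le_one_of_le₀ hω (norm_nonneg _)
    rw [hfac, norm_mul]
    exact pow_le_pow_left₀ (by positivity)
      (mul_le_of_le_one_left (norm_nonneg _) hω1) 2
  rw [circleAverage_poly_add c (n + 2) hτ, circleAverage_poly, circleAverage_poly,
    Finset.sum_range_succ', Finset.sum_range_succ' (fun k => ‖d k‖ ^ 2)] at hle
  have hτ0 : 0 ≤ circleAverage (fun z => ‖τ z‖ ^ 2) 0 1 :=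
    circleAverage_nonneg_of_nonneg fun z _ => by positivity
  have hd0 : ‖(1 : ℂ) - conj (b 0) * b 0‖ ^ 2 = (1 - ‖b 0‖ ^ 2) ^ 2 := by
    rw [mul_comm, Complex.mul_conj, Complex.normSq_eq_norm_sq, ← Complex.ofReal_one,
      ← Complex.ofReal_sub, Complex.norm_real, Real.norm_eq_abs, sq_abs]
  simp only [hc, hd, Nat.add_eq_zero_iff, one_ne_zero, and_false, if_false, if_true, norm_zero,
    norm_mul, norm_neg, RCLike.norm_conj, mul_pow, ← Finset.mul_sum, hd0] at hle
  linarith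

lemma coeff_sum_le_of_lt_one {b : ℕ → ℂ} (hb : Summable fun k => ‖b k‖)
    (hg : ∀ z : ℂ, ‖z‖ ≤ 1 → ‖seriesTail b 0 z‖ < 1) (n : ℕ) :
    ∑ k ∈ range n, ‖b (k + 1)‖ ^ 2 ≤
      ∑ k ∈ range n, (1 - ‖b 0‖ ^ 2) ^ 2 * (‖b 0‖ ^ 2) ^ k := by
  induction n with
  | zero => simp
  | succ n ih =>
    refine (coeff_sum_succ_le hb hg n).trans ?_
    have : ∑ k ∈ range (n + 1), (1 - ‖b 0‖ ^ 2) ^ 2 * (‖b 0‖ ^ 2) ^ k =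
        (1 - ‖b 0‖ ^ 2) ^ 2 +
          ‖b 0‖ ^ 2 * ∑ k ∈ range n, (1 - ‖b 0‖ ^ 2) ^ 2 * (‖b 0‖ ^ 2) ^ k := by
      rw [Finset.sum_range_succ', Finset.mul_sum, add_comm]
      congr 1
      · simp
      · exact Finset.sum_congr rfl fun k _ => by ring
    rw [this]
    gcongr

/-- Rogosinski's inequality for analytic self-maps of the disk: the case of strictly bounded
functions on the closed disk is applied to `z ↦ R f(Rz)`, and then `R → 1`. The factor `R` in front
also covers `|a₀| = 1`. -/
lemma coeff_sum_le_of_le_one {f : ℂ → ℂ} {a : ℕ → ℂ}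
    (hf : ∀ z : ℂ, ‖z‖ < 1 → HasSum (fun n => a n * z ^ n) (f z))
    (hbd : ∀ z : ℂ, ‖z‖ < 1 → ‖f z‖ ≤ 1) (n : ℕ) :
    ∑ k ∈ range n, ‖a (k + 1)‖ ^ 2 ≤
      ∑ k ∈ range n, (1 - ‖a 0‖ ^ 2) ^ 2 * (‖a 0‖ ^ 2) ^ k := by
  have key : ∀ R ∈ Set.Ioo (0 : ℝ) 1,
      ∑ k ∈ range n, (R ^ (k + 2) * ‖a (k + 1)‖) ^ 2 ≤
      ∑ k ∈ range n, (1 - (R * ‖a 0‖) ^ 2) ^ 2 * ((R * ‖a 0‖) ^ 2) ^ k := by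
    rintro R ⟨hR0, hR1⟩
    have hnR : ‖(R : ℂ)‖ = R := by rw [Complex.norm_real, Real.norm_of_nonneg hR0.le]
    set b : ℕ → ℂ := fun k => R * (a k * (R : ℂ) ^ k) with hbdef
    have hb : Summable fun k => ‖b k‖ :=
      ((hf R (by rwa [hnR])).summable.mul_left (R : ℂ)).norm
    have hRz : ∀ z : ℂ, ‖z‖ ≤ 1 → ‖R * z‖ < 1 := fun z hz => by
      rw [norm_mul, hnR]
      nlinarith [norm_nonneg z]
    have hg : ∀ z : ℂ, ‖z‖ ≤ 1 → ‖seriesTail b 0 z‖ < 1 := fun z hz => by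
      have h := ((hf (R * z) (hRz z hz)).mul_left (R : ℂ)).tsum_eq
      have h2 : seriesTail b 0 z = R * f (R * z) := by
        rw [← h]
        refine tsum_congr fun k => ?_
        simp only [hbdef, add_zero]
        ring
      rw [h2, norm_mul, hnR]
      nlinarith [hbd (R * z) (hRz z hz)]
    have h := coeff_sum_le_of_lt_one hb hg n
    have e : ∀ k, ‖b k‖ = R ^ (k + 1) * ‖a k‖ := fun k => by
      simp only [hbdef, norm_mul, norm_pow, hnR]
      ring
    simpa only [e, zero_add, pow_one] using h
  have h1 : (1 : ℝ) ∈ closure (Set.Ioo (0 : ℝ) 1) := by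
    rw [closure_Ioo (by norm_num)]; simp
  have := le_on_closure key (by fun_prop) (by fun_prop) h1
  simpa using this

/-- Abel summation: a domination of partial sums survives decreasing nonnegative weights. -/
lemma abel_sum_le {w x y : ℕ → ℝ} (hw0 : ∀ n, 0 ≤ w n) (hw : Antitone w)
    (h : ∀ n, ∑ k ∈ range n, x k ≤ ∑ k ∈ range n, y k) (n : ℕ) :
    ∑ k ∈ range n, w k * x k ≤ ∑ k ∈ range n, w k * y k := by
  have key : ∀ n, w n * (∑ k ∈ range n, y k - ∑ k ∈ range n, x k) ≤
      ∑ k ∈ range n, w k * y k - ∑ k ∈ range n, w k * x k := by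
    intro n
    induction n with
    | zero => simp
    | succ n ih =>
      have h1 := mul_le_mul_of_nonneg_right (hw n.le_succ) (sub_nonneg.2 (h (n + 1)))
      simp only [Finset.sum_range_succ, Nat.succ_eq_add_one] at h1 ⊢
      linarith
  have := key n
  have := mul_nonneg (hw0 n) (sub_nonneg.2 (h n))
  linarith

/-- The sharp area bound `∑ n|aₙ|²ρⁿ ≤ ρ(1-|a₀|²)²/(1-|a₀|²ρ)²`. The restriction `ρ ≤ 1/2` is
what makes the weights `nρⁿ`, `n ≥ 1`, decreasing. -/
lemma area_sum_le {f : ℂ → ℂ} {a : ℕ → ℂ}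
    (hf : ∀ z : ℂ, ‖z‖ < 1 → HasSum (fun n => a n * z ^ n) (f z))
    (hbd : ∀ z : ℂ, ‖z‖ < 1 → ‖f z‖ ≤ 1) (ha : ‖a 0‖ ≤ 1)
    {ρ : ℝ} (h0 : 0 ≤ ρ) (h1 : ρ ≤ 1 / 2) :
    ∑' n : ℕ, (n : ℝ) * ‖a n‖ ^ 2 * ρ ^ n ≤
      ρ * (1 - ‖a 0‖ ^ 2) ^ 2 / (1 - ‖a 0‖ ^ 2 * ρ) ^ 2 := by
  set α := ‖a 0‖ with hα
  have hα0 : 0 ≤ α := norm_nonneg _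
  have hα2 : α ^ 2 ≤ 1 := pow_le_one₀ hα0 ha
  have hx : ‖α ^ 2 * ρ‖ < 1 := by
    rw [Real.norm_of_nonneg (by positivity)]
    nlinarith
  set w : ℕ → ℝ := fun k => ((k + 1 : ℕ) : ℝ) * ρ ^ (k + 1) with hw
  have hw0 : ∀ n, 0 ≤ w n := fun n => by positivity
  have hwa : Antitone w := antitone_nat_of_succ_le fun k => by
    simp only [hw]
    push_cast
    have hp : 0 ≤ ρ ^ (k + 1) := by positivity
    rw [pow_succ ρ (k + 1)]
    have : ((k : ℝ) + 1 + 1) * ρ ≤ (k : ℝ) + 1 := by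
      have : (0 : ℝ) ≤ k := by positivity
      nlinarith
    nlinarith
  -- The `k`-th term here is the `(k+1)`-st term `(k+1) |b_{k+1}|² ρᵏ⁺¹` of the Möbius series.
  have hsum : HasSum (fun k : ℕ => w k * ((1 - α ^ 2) ^ 2 * (α ^ 2) ^ k))
      (ρ * (1 - α ^ 2) ^ 2 / (1 - α ^ 2 * ρ) ^ 2) := by
    have hne : 1 - α ^ 2 * ρ ≠ 0 := by
      have := (le_abs_self _).trans_lt hx
      linarith
    have hA := (hasSum_coe_mul_geometric_of_norm_lt_one hx).add (hasSum_geometric_of_norm_lt_one hx)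
    have hB := hA.mul_left (ρ * (1 - α ^ 2) ^ 2)
    have e1 : ρ * (1 - α ^ 2) ^ 2 * (α ^ 2 * ρ / (1 - α ^ 2 * ρ) ^ 2 + (1 - α ^ 2 * ρ)⁻¹) =
        ρ * (1 - α ^ 2) ^ 2 / (1 - α ^ 2 * ρ) ^ 2 := by
      have : α ^ 2 * ρ / (1 - α ^ 2 * ρ) ^ 2 + (1 - α ^ 2 * ρ)⁻¹ = 1 / (1 - α ^ 2 * ρ) ^ 2 := by
        generalize α ^ 2 * ρ = t at hne ⊢
        field_simp
        ring
      rw [this, mul_one_div]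
    rw [e1] at hB
    convert! hB using 2 with k
    simp only [hw]
    push_cast
    ring
  refine Real.tsum_le_of_sum_range_le (fun n => by positivity) fun n => ?_
  have hstep : ∑ k ∈ range n, (k : ℝ) * ‖a k‖ ^ 2 * ρ ^ k ≤
      ∑ k ∈ range (n + 1), (k : ℝ) * ‖a k‖ ^ 2 * ρ ^ k :=
    Finset.sum_le_sum_of_subset_of_nonneg (range_mono n.le_succ) fun k _ _ => by positivity
  refine hstep.trans ?_
  rw [Finset.sum_range_succ']
  simp only [Nat.cast_zero, zero_mul, add_zero]
  calc ∑ k ∈ range n, ((k + 1 : ℕ) : ℝ) * ‖a (k + 1)‖ ^ 2 * ρ ^ (k + 1)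
      = ∑ k ∈ range n, w k * ‖a (k + 1)‖ ^ 2 :=
        Finset.sum_congr rfl fun k _ => by simp only [hw]; ring
    _ ≤ ∑ k ∈ range n, w k * ((1 - α ^ 2) ^ 2 * (α ^ 2) ^ k) :=
        abel_sum_le hw0 hwa (coeff_sum_le_of_le_one hf hbd) n
    _ ≤ _ := sum_le_hasSum _ (fun k _ => mul_nonneg (hw0 k) (by positivity)) hsum

/-- Inequality for S_r/(π - S_r) (Ismagilov et al.). -/
theorem area_ratio_inequality (f : ℂ → ℂ) (a : ℕ → ℂ)
    (hf : ∀ z : ℂ, ‖z‖ < 1 → HasSum (fun n => a n * z ^ n) (f z))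
    (hbd : ∀ z : ℂ, ‖z‖ < 1 → ‖f z‖ ≤ 1)
    (r : ℝ) (hr0 : 0 ≤ r) (hr : r ≤ 1 / Real.sqrt 2)
    (S : ℝ) (hS : S = Real.pi * ∑' n : ℕ, (n : ℝ) * ‖a n‖ ^ 2 * r ^ (2 * n)) :
    S / (Real.pi - S) ≤
      r ^ 2 * (1 - ‖a 0‖ ^ 2) ^ 2 / ((1 - r ^ 2) * (1 - r ^ 2 * ‖a 0‖ ^ 4)) := by
  have ha : ‖a 0‖ ≤ 1 := by
    have h := hbd 0 (by simp)
    have h2 : f 0 = a 0 := by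
      rw [← (hf 0 (by simp)).tsum_eq, tsum_eq_single 0 (fun n hn => by simp [hn])]
      simp
    rwa [h2] at h
  have hρ : r ^ 2 ≤ 1 / 2 := by
    have := pow_le_pow_left₀ hr0 hr 2
    rwa [div_pow, Real.sq_sqrt (by norm_num), one_pow] at this
  have hA := area_sum_le hf hbd ha (sq_nonneg r) hρ
  simp only [← pow_mul] at hA
  set A := ∑' n : ℕ, (n : ℝ) * ‖a n‖ ^ 2 * r ^ (2 * n) with hAdef
  set α := ‖a 0‖
  have hα0 : 0 ≤ α := norm_nonneg _
  have hα2 : α ^ 2 ≤ 1 := pow_le_one₀ hα0 ha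
  have hα4 : α ^ 4 ≤ 1 := pow_le_one₀ hα0 ha
  set ρ := r ^ 2
  have hρ0 : 0 ≤ ρ := sq_nonneg r
  have hD : 0 < 1 - α ^ 2 * ρ := by nlinarith
  have hE : 0 < 1 - ρ * α ^ 4 := by nlinarith
  have hF : 0 < 1 - ρ := by linarith
  rw [le_div_iff₀ (by positivity)] at hA
  have hid : (1 - α ^ 2 * ρ) ^ 2 - ρ * (1 - α ^ 2) ^ 2 = (1 - ρ) * (1 - ρ * α ^ 4) := by ring
  have hEF : 0 < (1 - ρ) * (1 - ρ * α ^ 4) := mul_pos hF hE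
  have hA1 : 0 < 1 - A := by
    have hD2 : 0 < (1 - α ^ 2 * ρ) ^ 2 := by positivity
    by_contra hcon
    nlinarith
  have hSA : S / (Real.pi - S) = A / (1 - A) := by
    rw [hS, ← mul_one_sub, mul_div_mul_left _ _ Real.pi_ne_zero]
  rw [hSA, div_le_div_iff₀ hA1 hEF, ← hid]
  linarith
end
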